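/- Let C be a strong divisibility sequence, let p be an ideal prime for C with parameter s = s(p), let k ≥ 2, and write α = α(p). Let n = α·n' + r with 0 ≤ r < α, and let (m_1, …, m_k) be nonnegative integers with m_1 + ⋯ + m_k = n; write m_i = α·m_i' + r_i with 0 ≤ r_i < α, and set λ = n' − (m_1' + ⋯ + m_k'). Then ν_p(binom(n; m_1,…,m_k)_C) = s·λ + ν_p(n!/(n'−λ)! evaluated as ν_p(n'!/(n'−λ)!)) + ν_p((n'−λ)!/(m_1'!⋯m_k'!)); that is, ν_p(binom(n; m_1,…,m_k)_C) = s·λ + ν_p(n'!) − Σ_{i=1}^k ν_p(m_i'!). -/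

import Mathlib

open Finset

/-- A strong divisibility sequence: nonzero integers `Cs 1, Cs 2, ...` with
`gcd (Cs n) (Cs m) = |Cs (gcd n m)|`. -/
def IsStrongDivSeq (Cs : ℕ → ℤ) : Prop :=
  (∀ n, 1 ≤ n → Cs n ≠ 0) ∧
  ∀ m n, 1 ≤ m → 1 ≤ n → Int.gcd (Cs n) (Cs m) = (Cs (Nat.gcd n m)).natAbs

/-- `a` is the rank of apparition of `m` in the sequence `Cs`:
the least index `j ≥ 1` such that `m ∣ Cs j`. -/
def IsRank (Cs : ℕ → ℤ) (m a : ℕ) : Prop :=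
  1 ≤ a ∧ (m : ℤ) ∣ Cs a ∧ ∀ j, 1 ≤ j → (m : ℤ) ∣ Cs j → a ≤ j

/-- The `C`-orial: `0!_C = 1`, `n!_C = Cs 1 * Cs 2 * ⋯ * Cs n`. -/
def Corial (Cs : ℕ → ℤ) : ℕ → ℤ
  | 0 => 1
  | n + 1 => Corial Cs n * Cs (n + 1)

/-- `p` is an ideal prime for `Cs`, with `α k` the rank of apparition of `p ^ k`
and parameter `s = s(p)`. -/
def IdealPrime (Cs : ℕ → ℤ) (p : ℕ) (α : ℕ → ℕ) (s : ℕ) : Prop :=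
  1 ≤ s ∧ (∀ k, 1 ≤ k → IsRank Cs (p ^ k) (α k)) ∧
  (∀ k, 1 ≤ k → k ≤ s → α k = α 1) ∧
  (∀ k, s < k → α k = p ^ (k - s) * α 1)

/-- The `p`-adic valuation of the `C`-multinomial coefficient,
defined as `ν_p(n!_C) - ∑_i ν_p(m_i!_C)` (an integer). -/
def nuCmulti (p : ℕ) (Cs : ℕ → ℤ) {k : ℕ} (n : ℕ) (m : Fin k → ℕ) : ℤ :=
  (padicValInt p (Corial Cs n) : ℤ) - ∑ i, (padicValInt p (Corial Cs (m i)) : ℤ)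

/-- `T_{p,k,C}(n, x)`: the generating polynomial counting `C`-multinomial coefficients
with `k` parts and top index `n` by their `p`-adic valuations. -/
noncomputable def TmultiC (p k : ℕ) (Cs : ℕ → ℤ) (n : ℕ) : Polynomial ℤ :=
  ∑ m ∈ Finset.Nat.antidiagonalTuple k n, Polynomial.X ^ (nuCmulti p Cs n m).toNat

/-- `T_{p,k}(n, x)`: the generating polynomial counting ordinary multinomial coefficients
with `k` parts and top index `n` by their `p`-adic valuations. -/
noncomputable def TmultiOrd (p k n : ℕ) : Polynomial ℤ :=
  ∑ m ∈ Finset.Nat.antidiagonalTuple k n,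
    Polynomial.X ^ (padicValNat p (Nat.multinomial Finset.univ m))

/-- `T_{p,k,λ}(n, x)`: `0` if `n < λ`, and
`x^(ν_p(n!/(n-λ)!) + λ) · T_{p,k}(n - λ, x)` otherwise. -/
noncomputable def TmultiLam (p k lam n : ℕ) : Polynomial ℤ :=
  if n < lam then 0
  else Polynomial.X ^ ((padicValNat p (Nat.factorial n)
      - padicValNat p (Nat.factorial (n - lam))) + lam) * TmultiOrd p k (n - lam)

/-!
In a strong divisibility sequence `q ∣ C_j` if and only if the rank of `q` divides `j`. For an ideal
prime `p` and `v ≥ 1` the rank of `p ^ v` is `p ^ max(v - s, 0) * α(p)`, so `ν_p(C_j)` is `0` unless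
`α(p) ∣ j`, and `ν_p(C_{α(p) t}) = s + ν_p(t)`. Multiplying over `j ≤ N` gives the Legendre-type
formula `ν_p(N!_C) = s * ⌊N / α(p)⌋ + ν_p(⌊N / α(p)⌋!)`, to be applied to `n` and to every `m_i`.
-/

lemma corial_ne_zero {Cs : ℕ → ℤ} (hne : ∀ n, 1 ≤ n → Cs n ≠ 0) (N : ℕ) : Corial Cs N ≠ 0 := by
  induction N with
  | zero => exact one_ne_zero
  | succ N ih => exact mul_ne_zero ih (hne _ N.succ_pos)

namespace IsStrongDivSeq

variable {Cs : ℕ → ℤ} {i j : ℕ}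

lemma dvd_of_index_dvd (hC : IsStrongDivSeq Cs) (hi : 1 ≤ i) (hj : 1 ≤ j)
    (hij : i ∣ j) : Cs i ∣ Cs j := by
  have hgcd : Int.gcd (Cs j) (Cs i) = (Cs i).natAbs := by
    rw [hC.2 i j hi hj, Nat.gcd_eq_right hij]
  rw [← Int.natAbs_dvd, ← hgcd]
  exact Int.gcd_dvd_left _ _

lemma dvd_gcd_index (hC : IsStrongDivSeq Cs) (hi : 1 ≤ i) (hj : 1 ≤ j) {q : ℤ}
    (hqi : q ∣ Cs i) (hqj : q ∣ Cs j) : q ∣ Cs (Nat.gcd j i) := by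
  rw [← Int.dvd_natAbs, ← hC.2 i j hi hj]
  exact Int.dvd_coe_gcd hqj hqi

lemma dvd_iff_rank_dvd (hC : IsStrongDivSeq Cs) {q a : ℕ} (hrank : IsRank Cs q a)
    (hj : 1 ≤ j) : (q : ℤ) ∣ Cs j ↔ a ∣ j := by
  obtain ⟨ha, hqa, hleast⟩ := hrank
  refine ⟨fun hqj ↦ ?_, fun haj ↦ hqa.trans (hC.dvd_of_index_dvd ha hj haj)⟩
  have ha_le : a ≤ Nat.gcd j a :=
    hleast _ (Nat.gcd_pos_of_pos_left _ hj) (hC.dvd_gcd_index ha hj hqa hqj)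
  exact Nat.gcd_eq_right_iff_dvd.mp ((Nat.gcd_le_right _ ha).antisymm ha_le)

end IsStrongDivSeq

namespace IdealPrime

variable {Cs : ℕ → ℤ} {p s : ℕ} {α : ℕ → ℕ}

lemma rank_pos (hid : IdealPrime Cs p α s) : 0 < α 1 := (hid.2.1 1 le_rfl).1

-- Truncated subtraction merges the two regimes `v ≤ s` and `s < v`.
lemma rank_pow (hid : IdealPrime Cs p α s) {v : ℕ} (hv : 1 ≤ v) :
    α v = p ^ (v - s) * α 1 := by
  obtain hvs | hsv := le_or_gt v s
  · rw [hid.2.2.1 v hv hvs, Nat.sub_eq_zero_of_le hvs, pow_zero, one_mul]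
  · exact hid.2.2.2 v hsv

lemma pow_dvd_iff (hid : IdealPrime Cs p α s) (hC : IsStrongDivSeq Cs) {v j : ℕ}
    (hv : 1 ≤ v) (hj : 1 ≤ j) : (p : ℤ) ^ v ∣ Cs j ↔ p ^ (v - s) * α 1 ∣ j := by
  rw [← hid.rank_pow hv, ← hC.dvd_iff_rank_dvd (hid.2.1 v hv) hj, Nat.cast_pow]

lemma padicValInt_eq_zero_of_not_dvd (hid : IdealPrime Cs p α s) (hC : IsStrongDivSeq Cs) {j : ℕ}
    (hj : 1 ≤ j) (hαj : ¬ α 1 ∣ j) : padicValInt p (Cs j) = 0 := by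
  refine padicValInt.eq_zero_of_not_dvd fun hpj ↦ hαj ?_
  rw [← pow_one (p : ℤ), hid.pow_dvd_iff hC le_rfl hj] at hpj
  exact dvd_of_mul_left_dvd hpj

lemma padicValInt_rank_mul (hid : IdealPrime Cs p α s) (hC : IsStrongDivSeq Cs) (hp : p.Prime)
    {t : ℕ} (ht : 1 ≤ t) : padicValInt p (Cs (α 1 * t)) = s + padicValNat p t := by
  have : Fact p.Prime := ⟨hp⟩
  have hj : 1 ≤ α 1 * t := Nat.mul_pos hid.rank_pos ht
  refine eq_of_forall_le_iff fun v ↦ ?_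
  obtain rfl | hv := v.eq_zero_or_pos
  · simp only [zero_le]
  calc v ≤ padicValInt p (Cs (α 1 * t))
      ↔ (p : ℤ) ^ v ∣ Cs (α 1 * t) := by
        rw [padicValInt_dvd_iff, or_iff_right (hC.1 _ hj)]
    _ ↔ p ^ (v - s) ∣ t := by
        rw [hid.pow_dvd_iff hC hv hj, mul_comm (α 1), Nat.mul_dvd_mul_iff_right hid.rank_pos]
    _ ↔ v ≤ s + padicValNat p t := by
        rw [padicValNat_dvd_iff_le (Nat.ne_of_gt ht), Nat.sub_le_iff_le_add']

lemma padicValInt_corial (hid : IdealPrime Cs p α s) (hC : IsStrongDivSeq Cs) (hp : p.Prime)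
    (N : ℕ) : padicValInt p (Corial Cs N) =
      s * (N / α 1) + padicValNat p (Nat.factorial (N / α 1)) := by
  have : Fact p.Prime := ⟨hp⟩
  induction N with
  | zero => simp [Corial]
  | succ N ih =>
    rw [Corial, padicValInt.mul (corial_ne_zero hC.1 N) (hC.1 _ N.succ_pos), ih]
    by_cases hdvd : α 1 ∣ N + 1
    · have hquot : (N + 1) / α 1 = N / α 1 + 1 := Nat.succ_div_of_dvd hdvd
      have hval : padicValInt p (Cs (N + 1)) = s + padicValNat p (N / α 1 + 1) := by
        rw [← hid.padicValInt_rank_mul hC hp (Nat.le_add_left 1 _), ← hquot,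
          Nat.mul_div_cancel' hdvd]
      rw [hval, hquot, Nat.factorial_succ,
        padicValNat.mul (Nat.succ_ne_zero _) (Nat.factorial_ne_zero _)]
      ring
    · rw [hid.padicValInt_eq_zero_of_not_dvd hC N.succ_pos hdvd,
        Nat.succ_div_of_not_dvd hdvd, add_zero]

end IdealPrime

theorem stmt12_general (Cs : ℕ → ℤ) (p : ℕ) (hp : p.Prime) (α : ℕ → ℕ) (s : ℕ)
    (hC : IsStrongDivSeq Cs) (hid : IdealPrime Cs p α s)
    (k : ℕ) (n n' r : ℕ) (m m' rr : Fin k → ℕ)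
    (hn : n = α 1 * n' + r) (hr : r < α 1)
    (hm : ∀ i, m i = α 1 * m' i + rr i) (hri : ∀ i, rr i < α 1) :
    nuCmulti p Cs n m =
      (s : ℤ) * ((n' : ℤ) - ∑ i, (m' i : ℤ))
        + (padicValNat p (Nat.factorial n') : ℤ)
        - ∑ i, (padicValNat p (Nat.factorial (m' i)) : ℤ) := by
  have hn_div : n / α 1 = n' := by
    rw [hn, Nat.mul_add_div hid.rank_pos, Nat.div_eq_of_lt hr, add_zero]
  have hm_div (i : Fin k) : m i / α 1 = m' i := by
    rw [hm i, Nat.mul_add_div hid.rank_pos, Nat.div_eq_of_lt (hri i), add_zero]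
  simp only [nuCmulti, hid.padicValInt_corial hC hp, hn_div, hm_div, Nat.cast_add, Nat.cast_mul,
    Finset.sum_add_distrib, ← Finset.mul_sum]
  ring

theorem stmt12 (Cs : ℕ → ℤ) (p : ℕ) (hp : p.Prime) (α : ℕ → ℕ) (s : ℕ)
    (hC : IsStrongDivSeq Cs) (hid : IdealPrime Cs p α s)
    (k : ℕ) (hk : 2 ≤ k) (n n' r : ℕ) (m m' rr : Fin k → ℕ)
    (hn : n = α 1 * n' + r) (hr : r < α 1)
    (hm : ∀ i, m i = α 1 * m' i + rr i) (hri : ∀ i, rr i < α 1)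
    (hsum : ∑ i, m i = n) :
    nuCmulti p Cs n m =
      (s : ℤ) * ((n' : ℤ) - ∑ i, (m' i : ℤ))
        + (padicValNat p (Nat.factorial n') : ℤ)
        - ∑ i, (padicValNat p (Nat.factorial (m' i)) : ℤ) :=
  stmt12_general Cs p hp α s hC hid k n n' r m m' rr hn hr hm hri
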